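/- Let p be a prime, α a positive integer with α ≤ p-3, and b a positive integer. Then Σ_{1 ≤ l < bp, p∤l} 1/l^α ≡ -(b²α(α+1)/(2(α+2)))·B_{p-α-2}·p² (mod p³) if α is odd, and ≡ (bα/(α+1))·B_{p-α-1}·p (mod p²) if α is even. -/

import Mathlib

/-- `x ≡ y (mod p^r)` as p-integral rationals. -/
def ratCong (p r : ℕ) (x y : ℚ) : Prop :=
  ∃ z : ℚ, x - y = (p : ℚ) ^ r * z ∧ ¬ (p ∣ z.den)

def ZL (p : ℕ) (hp : p.Prime) : Subring ℚ where
  carrier := {z | ¬ p ∣ z.den}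
  mul_mem' := by
    intro a b ha hb h
    rcases hp.dvd_mul.1 (h.trans (Rat.mul_den_dvd a b)) with h | h
    · exact ha h
    · exact hb h
  one_mem' := by simpa using hp.one_lt.ne'
  add_mem' := by
    intro a b ha hb h
    rcases hp.dvd_mul.1 (h.trans (Rat.add_den_dvd a b)) with h | h
    · exact ha h
    · exact hb h
  zero_mem' := by simpa using hp.one_lt.ne'
  neg_mem' := by
    intro a ha
    simpa using ha

lemma ZL_inv_int {p : ℕ} (hp : p.Prime) (n : ℤ) (hn : ¬ (p : ℤ) ∣ n) : ((n : ℚ))⁻¹ ∈ ZL p hp := by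
  show ¬ p ∣ _
  rw [Rat.inv_intCast_den]
  split_ifs with h
  · simp [h] at hn
  · rwa [Int.natCast_dvd] at hn

lemma ZL_inv_nat {p : ℕ} (hp : p.Prime) (n : ℕ) (hn : ¬ p ∣ n) : ((n : ℚ))⁻¹ ∈ ZL p hp := by
  have := ZL_inv_int hp (n : ℤ) (by exact_mod_cast hn)
  simpa using this

/-- congruence -/
def Cg (p : ℕ) (hp : p.Prime) (r : ℕ) (x y : ℚ) : Prop :=
  ∃ z ∈ ZL p hp, x = y + (p : ℚ) ^ r * z

section
variable {p : ℕ} {hp : p.Prime} {r : ℕ} {x y z w : ℚ}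

lemma Cg.toRat (h : Cg p hp r x y) : ratCong p r x y := by
  obtain ⟨z, hz, h⟩ := h
  exact ⟨z, by rw [h]; ring, hz⟩

lemma Cg.refl : Cg p hp r x x := ⟨0, zero_mem _, by ring⟩

lemma Cg.symm (h : Cg p hp r x y) : Cg p hp r y x := by
  obtain ⟨z, hz, h⟩ := h
  exact ⟨-z, neg_mem hz, by rw [h]; ring⟩

lemma Cg.trans (h : Cg p hp r x y) (h' : Cg p hp r y z) : Cg p hp r x z := by
  obtain ⟨u, hu, h⟩ := h
  obtain ⟨v, hv, h'⟩ := h'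
  exact ⟨u + v, add_mem hu hv, by rw [h, h']; ring⟩

lemma Cg.add (h : Cg p hp r x y) (h' : Cg p hp r z w) : Cg p hp r (x + z) (y + w) := by
  obtain ⟨u, hu, h⟩ := h
  obtain ⟨v, hv, h'⟩ := h'
  exact ⟨u + v, add_mem hu hv, by rw [h, h']; ring⟩

lemma Cg.mulc (h : Cg p hp r x y) (hz : z ∈ ZL p hp) : Cg p hp r (z * x) (z * y) := by
  obtain ⟨u, hu, h⟩ := h
  exact ⟨z * u, mul_mem hz hu, by rw [h]; ring⟩

lemma Cg.mul (h : Cg p hp r x y) (h' : Cg p hp r z w) (hy : y ∈ ZL p hp) (hz : z ∈ ZL p hp) :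
    Cg p hp r (x * z) (y * w) := by
  have h1 := h.mulc hz
  have h2 := h'.mulc hy
  rw [mul_comm z, mul_comm z] at h1
  exact h1.trans h2

lemma Cg.sum {ι : Type*} {s : Finset ι} {f g : ι → ℚ} (h : ∀ i ∈ s, Cg p hp r (f i) (g i)) :
    Cg p hp r (∑ i ∈ s, f i) (∑ i ∈ s, g i) := by
  classical
  induction s using Finset.induction_on with
  | empty => exact Cg.refl
  | insert a s ha ih =>
    rw [Finset.sum_insert ha, Finset.sum_insert ha]
    exact (h a (by simp)).add (ih fun i hi => h i (by simp [hi]))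

lemma Cg.mem (h : Cg p hp r x y) (hy : y ∈ ZL p hp) : x ∈ ZL p hp := by
  obtain ⟨u, hu, h⟩ := h
  rw [h]
  exact add_mem hy (mul_mem (pow_mem (natCast_mem _ _) _) hu)

lemma Cg.lift (h : Cg p hp r x y) (s : ℕ) : Cg p hp (s + r) ((p : ℚ) ^ s * x) ((p : ℚ) ^ s * y) := by
  obtain ⟨u, hu, h⟩ := h
  exact ⟨u, hu, by rw [h]; ring⟩

lemma Cg.down (h : Cg p hp (r + 1) x y) : Cg p hp r x y := by
  obtain ⟨u, hu, h⟩ := h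
  exact ⟨p * u, mul_mem (natCast_mem _ _) hu, by rw [h]; ring⟩

lemma Cg.of_eq (h : x = y) : Cg p hp r x y := h ▸ Cg.refl

end

/-- first-order power expansion -/
lemma pow_expand {p : ℕ} {hp : p.Prime} {x s : ℚ} (hx : x ∈ ZL p hp) (hs : s ∈ ZL p hp) (n : ℕ) :
    Cg p hp 2 ((x + p * s) ^ (n + 1)) (x ^ (n + 1) + (n + 1) * p * s * x ^ n) := by
  induction n with
  | zero => exact Cg.of_eq (by simp)
  | succ n ih =>
    have hps : x + p * s ∈ ZL p hp := add_mem hx (mul_mem (natCast_mem _ _) hs)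
    have h1 := ih.mulc hps
    refine (Cg.of_eq (by ring)).trans (h1.trans ⟨(n + 1) * s ^ 2 * x ^ n, ?_, ?_⟩)
    · exact mul_mem (mul_mem (add_mem (natCast_mem _ _) (one_mem _)) (pow_mem hs _)) (pow_mem hx _)
    · push_cast; ring

/-- y = x - p t, inverse powers -/
lemma inv_expand {p : ℕ} {hp : p.Prime} {x y t : ℚ} (hx0 : x ≠ 0) (hy0 : y ≠ 0)
    (hx : x⁻¹ ∈ ZL p hp) (hy : y⁻¹ ∈ ZL p hp)
    (ht : t ∈ ZL p hp) (h : x = y + p * t) (n : ℕ) (hn : 1 ≤ n) :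
    Cg p hp 2 (y⁻¹ ^ n) (x⁻¹ ^ n + n * p * t * x⁻¹ ^ (n + 1)) := by
  obtain ⟨n, rfl⟩ : ∃ m, n = m + 1 := ⟨n - 1, by omega⟩
  have e : y⁻¹ = x⁻¹ + p * (t * x⁻¹ * y⁻¹) := by
    field_simp
    linarith
  have h1 := pow_expand (p := p) (hp := hp) (s := t * x⁻¹ * y⁻¹) hx (mul_mem (mul_mem ht hx) hy) n
  rw [← e] at h1
  refine h1.trans ⟨(n + 1) * t ^ 2 * x⁻¹ * y⁻¹ * x⁻¹ ^ (n + 1), ?_, ?_⟩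
  · exact mul_mem (mul_mem (mul_mem (mul_mem (add_mem (natCast_mem _ _) (one_mem _)) (pow_mem ht _)) hx) hy) (pow_mem hx _)
  · push_cast
    have e2 : x⁻¹ ^ (n+1+1) = x⁻¹ ^ n * x⁻¹ * x⁻¹ := by ring
    have e3 : x⁻¹ ^ (n+1) = x⁻¹ ^ n * x⁻¹ := by ring
    rw [e2, e3]
    generalize x⁻¹ = X at *
    generalize y⁻¹ = Y at *
    linear_combination ((n + 1) * p * t * X ^ n * X) * e

/-- second-order expansion for reflection: X = v + q v X with q = p c -/
lemma refl_expand {p : ℕ} {hp : p.Prime} {v X c : ℚ} (hv : v ∈ ZL p hp) (hX : X ∈ ZL p hp)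
    (hc : c ∈ ZL p hp) (h : X = v + p * c * v * X) (h2 : (2 : ℚ)⁻¹ ∈ ZL p hp) (n : ℕ) :
    Cg p hp 3 (X ^ n) (v ^ n + n * c * p * v ^ (n + 1) +
      n * (n + 1) / 2 * c ^ 2 * p ^ 2 * v ^ (n + 2)) := by
  have h0 : Cg p hp 3 X (v + c * p * v ^ 2 + c ^ 2 * p ^ 2 * v ^ 3) := by
    refine ⟨c ^ 3 * v ^ 3 * X, ?_, ?_⟩
    · exact mul_mem (mul_mem (pow_mem hc _) (pow_mem hv _)) hX
    · linear_combination (1 + p * c * v + p ^ 2 * c ^ 2 * v ^ 2) * h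
  have hpz : (p : ℚ) ∈ ZL p hp := natCast_mem _ _
  induction n with
  | zero => exact Cg.of_eq (by simp)
  | succ n ih =>
    have hnz : (n : ℚ) ∈ ZL p hp := natCast_mem _ _
    have h1 := h0.mul ih (add_mem (add_mem hv (mul_mem (mul_mem hc hpz) (pow_mem hv _)))
      (mul_mem (mul_mem (pow_mem hc _) (pow_mem hpz _)) (pow_mem hv _))) (pow_mem hX _)
    refine (Cg.of_eq (by ring)).trans (h1.trans ⟨v ^ (n + 4) * c ^ 3 * (n + n * (n + 1) * 2⁻¹ + n * (n + 1) * 2⁻¹ * c * p * v), ?_, ?_⟩)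
    · refine mul_mem (mul_mem (pow_mem hv _) (pow_mem hc _)) ?_
      have : (n : ℚ) * (n + 1) * 2⁻¹ ∈ ZL p hp := mul_mem (mul_mem hnz (add_mem hnz (one_mem _))) h2
      exact add_mem (add_mem hnz this) (mul_mem (mul_mem (mul_mem this hc) hpz) hv)
    · push_cast; ring

lemma bern_mem {p : ℕ} (hp : p.Prime) (n : ℕ) (hn : n + 2 ≤ p) : bernoulli n ∈ ZL p hp := by
  have key : bernoulli' n ∈ ZL p hp := by
    induction n using Nat.strong_induction_on with
    | _ n ih =>
      rw [bernoulli'_def]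
      refine sub_mem (one_mem _) (sum_mem fun k hk => ?_)
      have hk := Finset.mem_range.1 hk
      refine mul_mem ?_ (ih k hk (by omega))
      rw [div_eq_mul_inv]
      refine mul_mem (natCast_mem _ _) ?_
      have := ZL_inv_nat hp (n - k + 1) (Nat.not_dvd_of_pos_of_lt (by omega) (by omega))
      rw [Nat.cast_add, Nat.cast_sub hk.le] at this
      simpa using this
  rw [bernoulli]
  exact mul_mem (pow_mem (neg_mem (one_mem _)) _) key

lemma faul {p : ℕ} (hp : p.Prime) (k : ℕ) (hk1 : 1 ≤ k) (hk : k + 2 ≤ p) :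
    Cg p hp 2 (∑ i ∈ Finset.range p, (i : ℚ) ^ k) (p * bernoulli k) := by
  rw [sum_range_pow, Finset.sum_range_succ]
  have hinv : ((k : ℚ) + 1)⁻¹ ∈ ZL p hp := by
    have := ZL_inv_nat hp (k + 1) (Nat.not_dvd_of_pos_of_lt (by omega) (by omega))
    simpa using this
  refine ⟨∑ i ∈ Finset.range k, bernoulli i * ((k + 1).choose i) * p ^ (k - 1 - i) * ((k : ℚ) + 1)⁻¹, ?_, ?_⟩
  · refine sum_mem fun i hi => ?_
    have hi := Finset.mem_range.1 hi
    exact mul_mem (mul_mem (mul_mem (bern_mem hp i (by omega)) (natCast_mem _ _)) (pow_mem (natCast_mem _ _) _)) hinv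
  · rw [Finset.mul_sum, add_comm]
    congr 1
    · have : (k : ℚ) + 1 ≠ 0 := by positivity
      simp
      field_simp
    · refine Finset.sum_congr rfl fun i hi => ?_
      have hi := Finset.mem_range.1 hi
      rw [show k + 1 - i = 2 + (k - 1 - i) by omega, pow_add, div_eq_mul_inv]
      ring

/-- reduced residues -/
def Rd (p : ℕ) : Finset ℕ := (Finset.range p).filter (fun l => ¬ p ∣ l)

lemma Rd_perm {p : ℕ} (hp : p.Prime) (a : ℕ) (ha : ¬ p ∣ a) (f : ℕ → ℚ) :
    ∑ i ∈ Rd p, f (a * i % p) = ∑ i ∈ Rd p, f i := by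
  have maps : ∀ i ∈ Rd p, a * i % p ∈ Rd p := by
    intro i hi
    simp only [Rd, Finset.mem_filter, Finset.mem_range] at hi ⊢
    refine ⟨Nat.mod_lt _ hp.pos, fun h => ?_⟩
    have := (Nat.dvd_mod_iff (dvd_refl p)).1 h
    rcases hp.dvd_mul.1 this with h | h
    · exact ha h
    · exact hi.2 h
  have inj : Set.InjOn (fun i => a * i % p) (Rd p : Set ℕ) := by
    intro i hi j hj h
    simp only [Rd, Finset.coe_filter, Finset.mem_range, Set.mem_ofPred_eq] at hi hj
    have h' : a * i ≡ a * j [MOD p] := h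
    have := Nat.ModEq.cancel_left_of_coprime ((Nat.Prime.coprime_iff_not_dvd hp).2 ha) h'
    exact Nat.ModEq.eq_of_lt_of_lt this hi.1 hj.1
  refine Finset.sum_nbij (fun i => a * i % p) maps inj ?_ (fun _ _ => rfl)
  exact Finset.surjOn_of_injOn_of_card_le _ maps inj le_rfl

lemma exists_gen {p : ℕ} (hp : p.Prime) : ∃ a : ℕ, ¬ p ∣ a ∧
    ∀ m, 0 < m → m < p - 1 → ¬ (p : ℤ) ∣ ((1 - (a : ℤ) ^ m : ℤ)) := by
  haveI : Fact p.Prime := ⟨hp⟩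
  obtain ⟨g, hg⟩ := IsCyclic.exists_generator (α := (ZMod p)ˣ)
  have ho := orderOf_eq_card_of_forall_mem_zpowers hg
  rw [Nat.card_eq_fintype_card, ZMod.card_units] at ho
  refine ⟨(g : ZMod p).val, ?_, ?_⟩
  · rw [← ZMod.natCast_eq_zero_iff]
    simp
  · intro m h0 hm h
    rw [← ZMod.intCast_zmod_eq_zero_iff_dvd] at h
    push_cast at h
    rw [ZMod.natCast_zmod_val, sub_eq_zero] at h
    have : g ^ m = 1 := by
      ext
      push_cast
      exact h.symm
    have := Nat.le_of_dvd h0 (orderOf_dvd_of_pow_eq_one this)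
    omega

lemma fermat {p : ℕ} (hp : p.Prime) (n : ℕ) (hn : ¬ p ∣ n) : Cg p hp 1 ((n : ℚ) ^ (p - 1)) 1 := by
  have h := Int.ModEq.pow_card_sub_one_eq_one hp (n := n)
    (Nat.isCoprime_iff_coprime.2 ((Nat.Prime.coprime_iff_not_dvd hp).2 hn).symm)
  obtain ⟨c, hc⟩ := h.symm.dvd
  refine ⟨c, intCast_mem _ _, ?_⟩
  have : ((n : ℚ) ^ (p - 1) - 1) = p * c := by exact_mod_cast hc
  linarith

lemma Rd_nd {p i : ℕ} (h : i ∈ Rd p) : ¬ p ∣ i := (Finset.mem_filter.1 h).2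

lemma nd_ne {p i : ℕ} (h : ¬ p ∣ i) : (i : ℚ) ≠ 0 := by
  rintro h0
  have : i = 0 := by exact_mod_cast h0
  simp [this] at h

lemma nd_mul {p : ℕ} (hp : p.Prime) {a i : ℕ} (ha : ¬ p ∣ a) (h : ¬ p ∣ i) : ¬ p ∣ a * i := by
  intro h'
  rcases hp.dvd_mul.1 h' with h' | h'
  · exact ha h'
  · exact h h'

lemma nd_mod {p : ℕ} {i : ℕ} (h : ¬ p ∣ i) : ¬ p ∣ i % p := by
  rwa [Nat.dvd_mod_iff (dvd_refl p)]

/-- Voronoi, inverse powers -/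
lemma vor_inv {p : ℕ} (hp : p.Prime) (a : ℕ) (ha : ¬ p ∣ a) (n : ℕ) (hn : 1 ≤ n) :
    Cg p hp 2 (∑ i ∈ Rd p, (i : ℚ)⁻¹ ^ n) ((a : ℚ)⁻¹ ^ n * (∑ i ∈ Rd p, (i : ℚ)⁻¹ ^ n) +
      n * p * ∑ i ∈ Rd p, ((a * i / p : ℕ) : ℚ) * (a * i : ℚ)⁻¹ ^ (n + 1)) := by
  refine (Cg.of_eq (Rd_perm hp a ha (fun j => (j : ℚ)⁻¹ ^ n)).symm).trans ?_
  rw [Finset.mul_sum, Finset.mul_sum, ← Finset.sum_add_distrib]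
  refine Cg.sum fun i hi => ?_
  have hi := Rd_nd hi
  have hai := nd_mul hp ha hi
  have := inv_expand (p := p) (hp := hp) (x := ((a * i : ℕ) : ℚ)) (y := ((a * i % p : ℕ) : ℚ))
    (t := ((a * i / p : ℕ) : ℚ)) (nd_ne hai) (nd_ne (nd_mod hai)) (ZL_inv_nat hp _ hai)
    (ZL_inv_nat hp _ (nd_mod hai)) (natCast_mem _ _)
    (by exact_mod_cast (Nat.mod_add_div (a * i) p).symm) n hn
  refine this.trans (Cg.of_eq ?_)
  rw [Nat.cast_mul a i, mul_inv, mul_pow]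
  ring

/-- Voronoi, powers -/
lemma vor_pow {p : ℕ} (hp : p.Prime) (a : ℕ) (ha : ¬ p ∣ a) (n : ℕ) :
    Cg p hp 2 (∑ i ∈ Rd p, (i : ℚ) ^ (n + 1)) ((a : ℚ) ^ (n + 1) * (∑ i ∈ Rd p, (i : ℚ) ^ (n + 1)) +
      -((n + 1) * p * ∑ i ∈ Rd p, ((a * i / p : ℕ) : ℚ) * (a * i : ℚ) ^ n)) := by
  refine (Cg.of_eq (Rd_perm hp a ha (fun j => (j : ℚ) ^ (n + 1))).symm).trans ?_
  rw [Finset.mul_sum, Finset.mul_sum, ← Finset.sum_neg_distrib,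
    ← Finset.sum_add_distrib]
  refine Cg.sum fun i hi => ?_
  have := pow_expand (p := p) (hp := hp) (x := ((a * i : ℕ) : ℚ))
    (s := -((a * i / p : ℕ) : ℚ)) (natCast_mem _ _) (neg_mem (natCast_mem _ _)) n
  have e : ((a * i : ℕ) : ℚ) = ((a * i % p : ℕ) : ℚ) + p * ((a * i / p : ℕ) : ℚ) := by
    exact_mod_cast (Nat.mod_add_div (a * i) p).symm
  have e' : ((a * i : ℕ) : ℚ) + p * -((a * i / p : ℕ) : ℚ) = ((a * i % p : ℕ) : ℚ) := by
    rw [e]; ring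
  rw [e'] at this
  refine this.trans (Cg.of_eq ?_)
  rw [Nat.cast_mul a i]
  ring

lemma Rd_inv_mem {p : ℕ} (hp : p.Prime) (n : ℕ) : (∑ i ∈ Rd p, (i : ℚ)⁻¹ ^ n) ∈ ZL p hp :=
  sum_mem fun i hi => pow_mem (ZL_inv_nat hp _ (Rd_nd hi)) _

lemma unit_g {p : ℕ} (hp : p.Prime) (a : ℕ) (ha : ¬ p ∣ a) (n : ℕ)
    (h : ¬ (p : ℤ) ∣ ((1 - (a : ℤ) ^ n : ℤ))) :
    ∃ u ∈ ZL p hp, u * (1 - (a : ℚ)⁻¹ ^ n) = 1 := by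
  have h1 := ZL_inv_int hp _ h
  have h0 : (1 - (a : ℚ) ^ n) ≠ 0 := by
    intro h0
    have : (1 - (a : ℤ) ^ n) = 0 := by exact_mod_cast h0
    simp [this] at h
  push_cast at h1
  refine ⟨-((a : ℚ) ^ n * (1 - (a : ℚ) ^ n)⁻¹), neg_mem (mul_mem (pow_mem (natCast_mem _ _) _) h1), ?_⟩
  have := nd_ne ha
  rw [inv_pow]
  field_simp
  ring

lemma Rd_inv_zero {p : ℕ} (hp : p.Prime) (n : ℕ) (hn : 1 ≤ n) (hn' : n < p - 1) :
    Cg p hp 1 (∑ i ∈ Rd p, (i : ℚ)⁻¹ ^ n) 0 := by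
  obtain ⟨a, ha, hg⟩ := exists_gen hp
  obtain ⟨u, hu, hu1⟩ := unit_g hp a ha n (hg n hn hn')
  obtain ⟨z, hz, h⟩ := (vor_inv hp a ha n hn).down
  have hV : (∑ i ∈ Rd p, ((a * i / p : ℕ) : ℚ) * (a * i : ℚ)⁻¹ ^ (n + 1)) ∈ ZL p hp := by
    refine sum_mem fun i hi => mul_mem (natCast_mem _ _) (pow_mem ?_ _)
    exact_mod_cast ZL_inv_nat hp _ (nd_mul hp ha (Rd_nd hi))
  generalize (∑ i ∈ Rd p, ((a * i / p : ℕ) : ℚ) * (a * i : ℚ)⁻¹ ^ (n + 1)) = V at *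
  refine ⟨u * (n * V + z), mul_mem hu (add_mem (mul_mem (natCast_mem _ _) hV) hz), ?_⟩
  generalize (∑ i ∈ Rd p, (i : ℚ)⁻¹ ^ n) = X at *
  linear_combination u * h - X * hu1

lemma Rd_pow {p : ℕ} (n : ℕ) (hn : 1 ≤ n) :
    ∑ i ∈ Rd p, (i : ℚ) ^ n = ∑ i ∈ Finset.range p, (i : ℚ) ^ n := by
  rw [Rd, Finset.sum_filter]
  refine Finset.sum_congr rfl fun i hi => ?_
  have hi := Finset.mem_range.1 hi
  split_ifs with h
  · have : i = 0 := Nat.eq_zero_of_dvd_of_lt h hi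
    rw [this, Nat.cast_zero, zero_pow (by omega)]
  · rfl

lemma Rd_even {p : ℕ} (hp : p.Prime) (α : ℕ) (h1 : 1 ≤ α) (h2 : α + 3 ≤ p) :
    Cg p hp 2 (∑ i ∈ Rd p, (i : ℚ)⁻¹ ^ α) (α / (α + 1) * bernoulli (p - α - 1) * p) := by
  obtain ⟨a, ha, hg⟩ := exists_gen hp
  obtain ⟨u, hu, hu1⟩ := unit_g hp a ha α (hg α h1 (by omega))
  obtain ⟨m, hm⟩ : ∃ m, p = m + α + 2 := ⟨p - α - 2, by omega⟩
  obtain ⟨x, hx, hX⟩ := Rd_inv_zero hp α h1 (by omega)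
  obtain ⟨z1, hz1, e1⟩ := vor_inv hp a ha α h1
  obtain ⟨z2, hz2, e2⟩ := vor_pow hp a ha m
  obtain ⟨z3, hz3, e3⟩ := faul hp (m + 1) (by omega) (by omega)
  rw [← Rd_pow _ (by omega)] at e3
  have hB := bern_mem hp (m + 1) (by omega)
  rw [show p - α - 1 = m + 1 by omega]
  have hf : Cg p hp 1 (∑ i ∈ Rd p, ((a * i / p : ℕ) : ℚ) * (a * i : ℚ) ^ m)
      (∑ i ∈ Rd p, ((a * i / p : ℕ) : ℚ) * (a * i : ℚ)⁻¹ ^ (α + 1)) := by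
    refine Cg.sum fun i hi => Cg.mulc ?_ (natCast_mem _ _)
    have hai := nd_mul hp ha (Rd_nd hi)
    have h0 := nd_ne hai
    have hf := (fermat hp _ hai).mulc (pow_mem (ZL_inv_nat hp _ hai) (α + 1))
    rw [show p - 1 = m + (α + 1) by omega] at hf
    push_cast at hf h0
    refine (Cg.of_eq ?_).trans (hf.trans (Cg.of_eq (by ring)))
    rw [pow_add _ m, inv_pow]
    field_simp
  obtain ⟨z4, hz4, e4⟩ := hf
  have hgh : Cg p hp 1 ((a : ℚ) ^ (m + 1)) ((a : ℚ)⁻¹ ^ α) := by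
    have h0 := nd_ne ha
    have hf := (fermat hp _ ha).mulc (pow_mem (ZL_inv_nat hp _ ha) α)
    rw [show p - 1 = m + 1 + α by omega] at hf
    refine (Cg.of_eq ?_).trans (hf.trans (Cg.of_eq (by ring)))
    rw [pow_add _ (m + 1), inv_pow]
    field_simp
  obtain ⟨z5, hz5, e5⟩ := hgh
  have hG : (a : ℚ)⁻¹ ^ α ∈ ZL p hp := pow_mem (ZL_inv_nat hp _ ha) α
  have hinv : ((α : ℚ) + 1)⁻¹ ∈ ZL p hp := by
    have := ZL_inv_nat hp (α + 1) (Nat.not_dvd_of_pos_of_lt (by omega) (by omega))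
    simpa using this
  have hα0 : (α : ℚ) + 1 ≠ 0 := by positivity
  have hpm : (p : ℚ) = m + α + 2 := by exact_mod_cast hm
  rw [e5] at e2
  generalize (∑ i ∈ Rd p, ((a * i / p : ℕ) : ℚ) * (a * i : ℚ) ^ m) = V at *
  generalize (∑ i ∈ Rd p, ((a * i / p : ℕ) : ℚ) * (a * i : ℚ)⁻¹ ^ (α + 1)) = V' at *
  generalize (∑ i ∈ Rd p, (i : ℚ)⁻¹ ^ α) = X at *
  generalize (∑ i ∈ Rd p, (i : ℚ) ^ (m + 1)) = Y at *
  generalize (a : ℚ)⁻¹ ^ α = G at *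
  generalize bernoulli (m + 1) = B at *
  have hmz : ((m : ℚ)) ∈ ZL p hp := natCast_mem _ _
  have haz : ((α : ℚ)) ∈ ZL p hp := natCast_mem _ _
  have hpz : ((p : ℚ)) ∈ ZL p hp := natCast_mem _ _
  have hm1 : ((m : ℚ) + 1) ∈ ZL p hp := add_mem hmz (one_mem _)
  -- (1-G)(m+1)X + α (1-G) p B = p^2 w
  have key : ∃ w ∈ ZL p hp, (1 - G) * (m + 1) * X + α * (1 - G) * p * B = p ^ 2 * w := by
    refine ⟨(m + 1) * z1 + α * z2 - α * (m + 1) * z4 + α * z5 * (B + p * z3) - α * (1 - G) * z3, ?_, ?_⟩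
    · refine sub_mem (add_mem (sub_mem (add_mem (mul_mem hm1 hz1) (mul_mem haz hz2))
        (mul_mem (mul_mem haz hm1) hz4)) (mul_mem (mul_mem haz hz5) (add_mem hB (mul_mem hpz hz3))))
        (mul_mem (mul_mem haz (sub_mem (one_mem _) hG)) hz3)
    · subst e3
      subst e4
      linear_combination (m + 1 : ℚ) * e1 + (α : ℚ) * e2
  obtain ⟨w, hw, key⟩ := key
  refine ⟨((α : ℚ) + 1)⁻¹ * (x - u * w), mul_mem hinv (sub_mem hx (mul_mem hu hw)), ?_⟩
  have k2 : (m + 1 : ℚ) * X + α * p * B = p ^ 2 * (u * w) := by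
    linear_combination u * key - ((m + 1 : ℚ) * X + α * p * B) * hu1
  have k3 : (α + 1 : ℚ) * X = α * p * B + p ^ 2 * (x - u * w) := by
    have : (m + 1 : ℚ) = p - 1 - α := by linarith
    rw [this] at k2
    linear_combination -k2 + p * hX
  field_simp
  linear_combination k3

/-- the sum in question -/
def SS (p b n : ℕ) : ℚ := ∑ l ∈ (Finset.range (b * p)).filter (fun l => ¬ p ∣ l), (l : ℚ)⁻¹ ^ n

lemma SS_succ (p b n : ℕ) : SS p (b + 1) n = SS p b n + ∑ i ∈ Rd p, ((i + b * p : ℕ) : ℚ)⁻¹ ^ n := by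
  rw [SS, SS, Rd, Finset.sum_filter, Finset.sum_filter, Finset.sum_filter, add_mul, one_mul,
    Finset.sum_range_add]
  congr 1
  refine Finset.sum_congr rfl fun i _ => ?_
  simp only [add_comm (b * p) i, Nat.dvd_add_left (Dvd.intro_left b rfl : p ∣ b * p)]

lemma SS_block {p : ℕ} (hp : p.Prime) (b n : ℕ) (hn : 1 ≤ n) (hn' : n + 1 < p - 1) :
    Cg p hp 2 (SS p b n) (b * ∑ i ∈ Rd p, (i : ℚ)⁻¹ ^ n) := by
  induction b with
  | zero => exact Cg.of_eq (by simp [SS])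
  | succ b ih =>
    rw [SS_succ]
    have h1 : Cg p hp 2 (∑ i ∈ Rd p, ((i + b * p : ℕ) : ℚ)⁻¹ ^ n)
        (∑ i ∈ Rd p, ((i : ℚ)⁻¹ ^ n + n * p * (-b) * (i : ℚ)⁻¹ ^ (n + 1))) := by
      refine Cg.sum fun i hi => ?_
      have hi := Rd_nd hi
      have hi' : ¬ p ∣ i + b * p := by rwa [Nat.dvd_add_left (Dvd.intro_left b rfl)]
      exact inv_expand (nd_ne hi) (nd_ne hi') (ZL_inv_nat hp _ hi) (ZL_inv_nat hp _ hi')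
        (neg_mem (natCast_mem _ _)) (by push_cast; ring) n hn
    obtain ⟨z, hz, hZ⟩ := Rd_inv_zero hp (n + 1) (by omega) hn'
    rw [Finset.sum_add_distrib, ← Finset.mul_sum, hZ] at h1
    refine (ih.add h1).trans ⟨-(n * b * z), neg_mem (mul_mem (mul_mem (natCast_mem _ _) (natCast_mem _ _)) hz), ?_⟩
    push_cast; ring

lemma SS_block1 {p : ℕ} (hp : p.Prime) (b n : ℕ) (hn : 1 ≤ n) (hn' : n < p - 1) :
    Cg p hp 1 (SS p b n) 0 := by
  induction b with
  | zero => exact Cg.of_eq (by simp [SS])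
  | succ b ih =>
    rw [SS_succ]
    have h1 : Cg p hp 1 (∑ i ∈ Rd p, ((i + b * p : ℕ) : ℚ)⁻¹ ^ n) (∑ i ∈ Rd p, (i : ℚ)⁻¹ ^ n) := by
      refine Cg.sum fun i hi => ?_
      have hi := Rd_nd hi
      have hi' : ¬ p ∣ i + b * p := by rwa [Nat.dvd_add_left (Dvd.intro_left b rfl)]
      have := (inv_expand (p := p) (hp := hp) (t := -b) (nd_ne hi) (nd_ne hi') (ZL_inv_nat hp _ hi) (ZL_inv_nat hp _ hi')
        (neg_mem (natCast_mem _ _)) (by push_cast; ring) n hn).down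
      refine this.trans ⟨n * (-b) * (i : ℚ)⁻¹ ^ (n + 1), ?_, by ring⟩
      exact mul_mem (mul_mem (natCast_mem _ _) (neg_mem (natCast_mem _ _))) (pow_mem (ZL_inv_nat hp _ hi) _)
    exact (ih.add (h1.trans (Rd_inv_zero hp n hn hn'))).trans (Cg.of_eq (by simp))

lemma SS_even {p : ℕ} (hp : p.Prime) (b n : ℕ) (hn : 1 ≤ n) (hn' : n + 3 ≤ p) :
    Cg p hp 2 (SS p b n) ((b : ℚ) * n / (n + 1) * bernoulli (p - n - 1) * p) := by
  refine (SS_block hp b n hn (by omega)).trans (((Rd_even hp n hn hn').mulc (natCast_mem _ b)).trans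
    (Cg.of_eq (by ring)))

lemma SS_reflect (p b n : ℕ) : SS p b n =
    ∑ l ∈ (Finset.range (b * p)).filter (fun l => ¬ p ∣ l), ((b * p : ℚ) - l)⁻¹ ^ n := by
  have key : ∀ l ∈ (Finset.range (b * p)).filter (fun l => ¬ p ∣ l),
      b * p - l ∈ (Finset.range (b * p)).filter (fun l => ¬ p ∣ l) := by
    intro l hl
    simp only [Finset.mem_filter, Finset.mem_range] at hl ⊢
    have : l ≠ 0 := by rintro rfl; simp at hl
    refine ⟨by omega, fun h => hl.2 ?_⟩
    exact (Nat.dvd_sub_iff_right hl.1.le (Dvd.intro_left b rfl)).1 h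
  refine Finset.sum_nbij' (fun l => b * p - l) (fun l => b * p - l) key key ?_ ?_ ?_
  · intro l hl
    simp only [Finset.mem_filter, Finset.mem_range] at hl
    omega
  · intro l hl
    simp only [Finset.mem_filter, Finset.mem_range] at hl
    omega
  · intro l hl
    simp only [Finset.mem_filter, Finset.mem_range] at hl
    rw [Nat.cast_sub hl.1.le]
    push_cast
    simp

lemma SS_odd {p : ℕ} (hp : p.Prime) (b n : ℕ) (hn : 1 ≤ n) (hn' : n + 4 ≤ p) (ho : Odd n) :
    Cg p hp 3 (SS p b n) (-((b : ℚ) ^ 2 * n * (n + 1) / (2 * (n + 2))) * bernoulli (p - n - 2) * p ^ 2) := by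
  have h2 : (2 : ℚ)⁻¹ ∈ ZL p hp := by
    have := ZL_inv_nat hp 2 (Nat.not_dvd_of_pos_of_lt (by omega) (by omega))
    simpa using this
  have h1 : Cg p hp 3 (-SS p b n) (∑ l ∈ (Finset.range (b * p)).filter (fun l => ¬ p ∣ l),
      ((l : ℚ)⁻¹ ^ n + n * b * p * (l : ℚ)⁻¹ ^ (n + 1) +
      n * (n + 1) / 2 * (b : ℚ) ^ 2 * p ^ 2 * (l : ℚ)⁻¹ ^ (n + 2))) := by
    rw [SS_reflect, ← Finset.sum_neg_distrib]
    refine Cg.sum fun l hl => ?_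
    simp only [Finset.mem_filter, Finset.mem_range] at hl
    have hl0 := nd_ne hl.2
    have hd : ¬ (p : ℤ) ∣ ((l : ℤ) - (b * p : ℤ)) := by
      intro h
      have := (Int.dvd_iff_dvd_of_dvd_sub (a := (p : ℤ)) (b := l) (c := (b * p : ℤ)) h).2 (Dvd.intro_left _ rfl)
      exact hl.2 (by exact_mod_cast this)
    have hX := ZL_inv_int hp _ hd
    push_cast at hX
    have h0 : (l : ℚ) - b * p ≠ 0 := by
      intro h0
      have : ((l : ℤ) - (b * p : ℤ)) = 0 := by exact_mod_cast h0
      rw [this] at hd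
      simp at hd
    have := refl_expand (p := p) (hp := hp) (c := b) (ZL_inv_nat hp _ hl.2) hX (natCast_mem _ _)
      (by field_simp; ring) h2 n
    refine (Cg.of_eq ?_).trans this
    rw [← ho.neg_pow, ← inv_neg, neg_sub]
  rw [Finset.sum_add_distrib, Finset.sum_add_distrib, ← Finset.mul_sum, ← Finset.mul_sum] at h1
  change Cg p hp 3 _ (SS p b n + _ * SS p b (n + 1) + _ * SS p b (n + 2)) at h1
  obtain ⟨z1, hz1, e1⟩ := h1
  obtain ⟨z2, hz2, e2⟩ := SS_even hp b (n + 1) (by omega) (by omega)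
  obtain ⟨z3, hz3, e3⟩ := SS_block1 hp b (n + 2) (by omega) (by omega)
  rw [show p - (n + 1) - 1 = p - n - 2 by omega] at e2
  rw [e2, e3] at e1
  have hbz : (b : ℚ) ∈ ZL p hp := natCast_mem _ _
  have hnz : (n : ℚ) ∈ ZL p hp := natCast_mem _ _
  refine ⟨-(2⁻¹ * (z1 + n * b * z2 + n * (n + 1) * 2⁻¹ * b ^ 2 * z3)), ?_, ?_⟩
  · refine neg_mem (mul_mem h2 (add_mem (add_mem hz1 (mul_mem (mul_mem hnz hbz) hz2))
      (mul_mem (mul_mem (mul_mem (mul_mem hnz (add_mem hnz (one_mem _))) h2) (pow_mem hbz _)) hz3)))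
  · have : (n : ℚ) + 2 ≠ 0 := by positivity
    push_cast at e1
    rw [show (n : ℚ) + 1 + 1 = n + 2 by ring] at e1
    field_simp at e1 ⊢
    linear_combination -e1

theorem stmt_3 (p α b : ℕ) (hp : p.Prime) (hα : 1 ≤ α) (hαp : α ≤ p - 3) (hb : 1 ≤ b) :
    (Odd α → ratCong p 3
      (∑ l ∈ (Finset.Ico 1 (b * p)).filter (fun l => ¬ p ∣ l), (1 : ℚ) / l ^ α)
      (-((b : ℚ) ^ 2 * α * (α + 1) / (2 * (α + 2))) * bernoulli (p - α - 2) * p ^ 2)) ∧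
    (Even α → ratCong p 2
      (∑ l ∈ (Finset.Ico 1 (b * p)).filter (fun l => ¬ p ∣ l), (1 : ℚ) / l ^ α)
      (((b : ℚ) * α / (α + 1)) * bernoulli (p - α - 1) * p)) := by
  have e : (∑ l ∈ (Finset.Ico 1 (b * p)).filter (fun l => ¬ p ∣ l), (1 : ℚ) / l ^ α) = SS p b α := by
    rw [SS]
    refine Finset.sum_congr ?_ fun l _ => by rw [inv_pow, one_div]
    ext l
    simp only [Finset.mem_filter, Finset.mem_range, Finset.mem_Ico]
    constructor
    · rintro ⟨⟨_, h⟩, h'⟩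
      exact ⟨h, h'⟩
    · rintro ⟨h, h'⟩
      refine ⟨⟨Nat.one_le_iff_ne_zero.2 ?_, h⟩, h'⟩
      rintro rfl
      simp at h'
  rw [e]
  constructor
  · intro ho
    refine (SS_odd hp b α hα ?_ ho).toRat
    have h2 : Odd p := hp.odd_of_ne_two (by omega)
    obtain ⟨k, rfl⟩ := ho
    obtain ⟨m, hm⟩ := h2
    omega
  · intro _
    exact (SS_even hp b α hα (by omega)).toRat
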